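/- arXiv:math/0006207 — 2 statements merged into one kernel-verified Lean document; each statement's English description precedes it below -/
import Mathlib

section
/- For all integers i, j ≥ 0, the identity \sum_{k=0}^{\min(i,j)} q^{(i-k)(j-k)} / ((q)_k (q)_{i-k} (q)_{j-k}) = 1 / ((q)_i (q)_j) holds as an identity of formal power series in q. -/
/-!
Put `q = 1/Q`. After multiplication by `(q)_i (q)_j`, the `k`-th summand is, when `Q` is a prime
power, the probability that a uniformly random `i × j` matrix over `𝔽_Q` has rank `k`, so the
identity says that these probabilities add up to one. The algebraic proof conditions on the first
row of an `(i + 1) × j` matrix: it vanishes with probability `q ^ j`, leaving an `i × j` matrix of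
the same rank, and otherwise column operations leave an `i × (j - 1)` matrix of rank one less.
The resulting recursion holds for every `q` for which the denominators are invertible.
-/

open Finset

/-- `(q)_n = (q;q)_n = ∏_{t=0}^{n-1} (1 - q^{t+1})` as a formal power series over `ℚ`. -/
noncomputable def qPochPS (n : ℕ) : PowerSeries ℚ :=
  ∏ t ∈ Finset.range n, (1 - (PowerSeries.X : PowerSeries ℚ) ^ (t + 1))

open scoped Ring

section QFactorials

variable {R : Type*} [CommRing R] (q : R)

/-- The `q`-Pochhammer symbol `(q)_n = (q;q)_n` of an element `q` of a commutative ring. -/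
def qPochhammer (n : ℕ) : R :=
  ∏ t ∈ range n, (1 - q ^ (t + 1))

/-- The `q`-analogue `(1 - q ^ n) (1 - q ^ (n - 1)) ⋯ (1 - q ^ (n - k + 1))` of
`Nat.descFactorial n k`, without the usual division by `(1 - q) ^ k`. It is `(q)_n / (q)_{n-k}`
for `k ≤ n`; for `k > n` the factor `t = n` makes it vanish, despite the truncated subtraction. -/
def qDescFactorial (n k : ℕ) : R :=
  ∏ t ∈ range k, (1 - q ^ (n - t))

theorem qPochhammer_zero : qPochhammer q 0 = 1 :=
  prod_range_zero _

theorem qPochhammer_succ (n : ℕ) :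
    qPochhammer q (n + 1) = qPochhammer q n * (1 - q ^ (n + 1)) :=
  prod_range_succ _ _

theorem qPochhammer_dvd_qPochhammer {m n : ℕ} (h : m ≤ n) : qPochhammer q m ∣ qPochhammer q n :=
  prod_dvd_prod_of_subset _ _ _ (range_subset_range.mpr h)

theorem qDescFactorial_zero (n : ℕ) : qDescFactorial q n 0 = 1 :=
  prod_range_zero _

theorem qDescFactorial_succ (n k : ℕ) :
    qDescFactorial q n (k + 1) = qDescFactorial q n k * (1 - q ^ (n - k)) :=
  prod_range_succ _ _

/-- For `n = 0` the truncated `n - 1` is harmless, since `1 - q ^ n` vanishes. -/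
theorem qDescFactorial_succ' (n k : ℕ) :
    qDescFactorial q n (k + 1) = (1 - q ^ n) * qDescFactorial q (n - 1) k := by
  simp only [qDescFactorial, prod_range_succ', Nat.sub_zero, Nat.sub_sub, Nat.add_comm 1, mul_comm]

theorem qDescFactorial_of_lt {n k : ℕ} (h : n < k) : qDescFactorial q n k = 0 :=
  prod_eq_zero (mem_range.mpr h) (by rw [Nat.sub_self, pow_zero, sub_self])

theorem succ_qDescFactorial_succ (n k : ℕ) :
    qDescFactorial q (n + 1) (k + 1) =
      (1 - q ^ (k + 1)) * qDescFactorial q n k + q ^ (k + 1) * qDescFactorial q n (k + 1) := by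
  rw [qDescFactorial_succ', Nat.add_sub_cancel, qDescFactorial_succ]
  rcases lt_or_ge n k with h | h
  · simp [qDescFactorial_of_lt q h]
  · obtain ⟨a, rfl⟩ := Nat.exists_eq_add_of_le h
    rw [Nat.add_sub_cancel_left]
    ring

theorem qDescFactorial_mul_qPochhammer {n k : ℕ} (h : k ≤ n) :
    qDescFactorial q n k * qPochhammer q (n - k) = qPochhammer q n := by
  induction k with
  | zero => rw [qDescFactorial_zero, one_mul, Nat.sub_zero]
  | succ k ih =>
    have hsub : n - k = n - (k + 1) + 1 := by omega
    rw [← ih (by omega), qDescFactorial_succ, hsub, qPochhammer_succ]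
    ring

variable {q}

theorem one_sub_pow_mul_inverse_qPochhammer {n : ℕ} (h : IsUnit (qPochhammer q (n + 1))) :
    (1 - q ^ (n + 1)) * (qPochhammer q (n + 1))⁻¹ʳ = (qPochhammer q n)⁻¹ʳ := by
  rw [qPochhammer_succ] at h ⊢
  rw [Ring.mul_inverse_rev, Ring.mul_inverse_cancel_left _ _ (isUnit_of_mul_isUnit_right h)]

theorem inverse_qPochhammer_sub {n k : ℕ} (hk : k ≤ n) (hn : IsUnit (qPochhammer q n)) :
    (qPochhammer q (n - k))⁻¹ʳ = qDescFactorial q n k * (qPochhammer q n)⁻¹ʳ := by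
  have hsub : IsUnit (qPochhammer q (n - k)) :=
    isUnit_of_dvd_unit (qPochhammer_dvd_qPochhammer q (Nat.sub_le n k)) hn
  rw [Ring.eq_mul_inverse_iff_mul_eq _ _ _ hn, ← qDescFactorial_mul_qPochhammer q hk,
    mul_comm, Ring.mul_inverse_cancel_right _ _ hsub]

end QFactorials

section RankProb

variable {R : Type*} [CommRing R] (q : R)

/-- The probability that a uniformly random `i × j` matrix over `𝔽_Q` has rank `k`, as an
expression in `q = 1/Q` that makes sense in every commutative ring where `(q)_k` is a unit. -/
noncomputable def rankProb (i j k : ℕ) : R :=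
  q ^ ((i - k) * (j - k)) * qDescFactorial q i k * qDescFactorial q j k * (qPochhammer q k)⁻¹ʳ

theorem rankProb_of_left_lt {i k : ℕ} (j : ℕ) (h : i < k) : rankProb q i j k = 0 := by
  rw [rankProb, qDescFactorial_of_lt q h, mul_zero, zero_mul, zero_mul]

theorem rankProb_of_right_lt (i : ℕ) {j k : ℕ} (h : j < k) : rankProb q i j k = 0 := by
  rw [rankProb, qDescFactorial_of_lt q h, mul_zero, zero_mul]

theorem rankProb_zero_right (i j : ℕ) : rankProb q i j 0 = q ^ (i * j) := by
  simp only [rankProb, Nat.sub_zero, qDescFactorial_zero, qPochhammer_zero, Ring.inverse_one,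
    mul_one]

theorem pow_mul_rankProb (i j k : ℕ) :
    q ^ j * rankProb q i j k =
      q ^ ((i + 1 - k) * (j - k)) * q ^ k * qDescFactorial q i k * qDescFactorial q j k *
        (qPochhammer q k)⁻¹ʳ := by
  rcases lt_or_ge i k with hi | hi
  · rw [rankProb_of_left_lt q j hi, qDescFactorial_of_lt q hi]
    ring
  rcases lt_or_ge j k with hj | hj
  · rw [rankProb_of_right_lt q i hj, qDescFactorial_of_lt q hj]
    ring
  obtain ⟨a, rfl⟩ := Nat.exists_eq_add_of_le hi
  obtain ⟨b, rfl⟩ := Nat.exists_eq_add_of_le hj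
  rw [rankProb, Nat.add_assoc k a 1]
  simp only [Nat.add_sub_cancel_left]
  ring

variable {q}

theorem rankProb_succ_succ (i j : ℕ) {k : ℕ} (hk : IsUnit (qPochhammer q (k + 1))) :
    rankProb q (i + 1) j (k + 1) =
      (1 - q ^ j) * rankProb q i (j - 1) k + q ^ j * rankProb q i j (k + 1) := by
  rw [pow_mul_rankProb, rankProb, rankProb, succ_qDescFactorial_succ, qDescFactorial_succ' q j,
    ← one_sub_pow_mul_inverse_qPochhammer hk, Nat.add_sub_add_right, Nat.sub_sub, Nat.add_comm 1]
  ring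

theorem sum_range_rankProb {i : ℕ} (hi : IsUnit (qPochhammer q i)) (j : ℕ) :
    ∑ k ∈ range (i + 1), rankProb q i j k = 1 := by
  induction i generalizing j with
  | zero => rw [sum_range_one, rankProb_zero_right, zero_mul, pow_zero]
  | succ i ih =>
    have isUnit_of_le {m : ℕ} (hm : m ≤ i + 1) : IsUnit (qPochhammer q m) :=
      isUnit_of_dvd_unit (qPochhammer_dvd_qPochhammer q hm) hi
    have sum_eq_one := ih (isUnit_of_le i.le_succ)
    have sum_succ_eq_one : ∑ k ∈ range (i + 1 + 1), rankProb q i j k = 1 := by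
      rw [sum_range_succ, rankProb_of_left_lt q j i.lt_succ_self, add_zero, sum_eq_one]
    calc ∑ k ∈ range (i + 1 + 1), rankProb q (i + 1) j k
      _ = ∑ k ∈ range (i + 1),
            ((1 - q ^ j) * rankProb q i (j - 1) k + q ^ j * rankProb q i j (k + 1)) +
          q ^ j * rankProb q i j 0 := by
        rw [sum_range_succ']
        congr 1
        · exact sum_congr rfl fun k hk =>
            rankProb_succ_succ i j (isUnit_of_le (mem_range.mp hk))
        · rw [rankProb_zero_right, rankProb_zero_right]
          ring
      _ = (1 - q ^ j) * ∑ k ∈ range (i + 1), rankProb q i (j - 1) k +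
          q ^ j * ∑ k ∈ range (i + 1 + 1), rankProb q i j k := by
        rw [sum_add_distrib, ← mul_sum, ← mul_sum, sum_range_succ' (rankProb q i j)]
        ring
      _ = 1 := by
        rw [sum_eq_one, sum_succ_eq_one]
        ring

theorem sum_range_min_rankProb {i : ℕ} (hi : IsUnit (qPochhammer q i)) (j : ℕ) :
    ∑ k ∈ range (min i j + 1), rankProb q i j k = 1 := by
  rw [← sum_range_rankProb hi j]
  refine sum_subset (range_subset_range.mpr (by omega)) fun k hk hk' => ?_
  rw [mem_range] at hk hk'
  exact rankProb_of_right_lt q i (by omega)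

theorem rankProb_mul_inverse_qPochhammer {i j k : ℕ} (hki : k ≤ i) (hkj : k ≤ j)
    (hi : IsUnit (qPochhammer q i)) (hj : IsUnit (qPochhammer q j)) :
    rankProb q i j k * ((qPochhammer q i)⁻¹ʳ * (qPochhammer q j)⁻¹ʳ) =
      q ^ ((i - k) * (j - k)) *
        (qPochhammer q k)⁻¹ʳ * (qPochhammer q (i - k))⁻¹ʳ * (qPochhammer q (j - k))⁻¹ʳ := by
  rw [rankProb, inverse_qPochhammer_sub hki hi, inverse_qPochhammer_sub hkj hj]
  ring

end RankProb

theorem key_identity_powerseries_general {R : Type*} [CommRing R] {q : R} {i j : ℕ}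
    (hi : IsUnit (qPochhammer q i)) (hj : IsUnit (qPochhammer q j)) :
    ∑ k ∈ range (min i j + 1),
      q ^ ((i - k) * (j - k)) *
        (qPochhammer q k)⁻¹ʳ * (qPochhammer q (i - k))⁻¹ʳ * (qPochhammer q (j - k))⁻¹ʳ =
    (qPochhammer q i)⁻¹ʳ * (qPochhammer q j)⁻¹ʳ := by
  rw [← one_mul (_ * _), ← sum_range_min_rankProb hi j, sum_mul]
  refine sum_congr rfl fun k hk => ?_
  have hk_le : k ≤ min i j := Nat.lt_succ_iff.mp (mem_range.mp hk)
  exact (rankProb_mul_inverse_qPochhammer (hk_le.trans (min_le_left i j))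
    (hk_le.trans (min_le_right i j)) hi hj).symm

theorem isUnit_qPochPS (n : ℕ) : IsUnit (qPochPS n) := by
  rw [PowerSeries.isUnit_iff_constantCoeff]
  simp [qPochPS, map_prod]

theorem powerSeries_inv_eq_inverse {K : Type*} [Field K] (f : PowerSeries K) : f⁻¹ = f⁻¹ʳ := by
  by_cases hf : PowerSeries.constantCoeff f = 0
  · have not_isUnit : ¬ IsUnit f := by
      rw [PowerSeries.isUnit_iff_constantCoeff, hf]
      exact not_isUnit_zero
    rw [PowerSeries.inv_eq_zero.mpr hf, Ring.inverse_non_unit _ not_isUnit]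
  · rw [PowerSeries.inv_eq_iff_mul_eq_one hf]
    exact Ring.inverse_mul_cancel f
      (PowerSeries.isUnit_iff_constantCoeff.mpr (isUnit_iff_ne_zero.mpr hf))

/-- Identity (2.4): for `i, j ≥ 0`,
`∑_{k=0}^{min(i,j)} q^{(i-k)(j-k)} / ((q)_k (q)_{i-k} (q)_{j-k}) = 1 / ((q)_i (q)_j)`
as formal power series in `q`. -/
theorem key_identity_powerseries (i j : ℕ) :
    ∑ k ∈ Finset.range (min i j + 1),
      (PowerSeries.X : PowerSeries ℚ) ^ ((i - k) * (j - k)) *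
        (qPochPS k)⁻¹ * (qPochPS (i - k))⁻¹ * (qPochPS (j - k))⁻¹ =
    (qPochPS i)⁻¹ * (qPochPS j)⁻¹ := by
  simp only [powerSeries_inv_eq_inverse]
  exact key_identity_powerseries_general (isUnit_qPochPS i) (isUnit_qPochPS j)
end

section
/- For all integers L, M, i, j with i ≥ 0, j ≥ 0, L ≥ i+j and M ≥ i+j, the identity \sum_{k=0}^{\min(i,j)} q^{T_{i+j-k} + T_k} [M-i-j+k; k] [M-j; i-k] [L-i; j-k] = q^{T_i + T_j} [L; j] [M-j; i] holds as an identity of polynomials in q, where [m; r] denotes the Gaussian binomial coefficient. -/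
/-!
Trinomial revision gives `[M-i-j+k; k] [M-j; i-k] = [M-j; i] [i; k]`, and
`T_{i+j-k} + T_k = T_i + T_j + (i-k)(j-k)`. After these two substitutions the common factor
`q^{T_i+T_j} [M-j; i]` leaves the sum, and what remains is the `q`-Vandermonde expansion of
`[L; j]`.
-/

open Finset

/-- `(q)_n = (q;q)_n = ∏_{t=0}^{n-1} (1 - q^{t+1})` in `ℚ(q)`. -/
noncomputable def qPoch (n : ℕ) : RatFunc ℚ :=
  ∏ t ∈ Finset.range n, (1 - (RatFunc.X : RatFunc ℚ) ^ (t + 1))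

/-- The Gaussian (q-)binomial coefficient `[m; r] = (q)_m / ((q)_r (q)_{m-r})` for
`0 ≤ r ≤ m`, and `0` otherwise. -/
noncomputable def qbin (m r : ℤ) : RatFunc ℚ :=
  if 0 ≤ r ∧ r ≤ m then qPoch m.toNat / (qPoch r.toNat * qPoch (m - r).toNat) else 0

/-- `T n = n(n+1)/2`, the n-th triangular number (on `ℤ`, the division is exact). -/
def triZ (n : ℤ) : ℤ := n * (n + 1) / 2

section QBinomial

local notation "q" => (RatFunc.X : RatFunc ℚ)

lemma one_sub_X_pow_succ_ne_zero (n : ℕ) : 1 - q ^ (n + 1) ≠ 0 := by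
  intro h
  have hpoly : (1 - Polynomial.X ^ (n + 1) : Polynomial ℚ) = 0 :=
    RatFunc.algebraMap_injective ℚ (by simpa [RatFunc.algebraMap_X] using h)
  simpa using congrArg (Polynomial.eval 0) hpoly

lemma qPoch_zero : qPoch 0 = 1 := prod_range_zero _

lemma qPoch_succ (n : ℕ) : qPoch (n + 1) = qPoch n * (1 - q ^ (n + 1)) :=
  prod_range_succ _ n

lemma qPoch_ne_zero (n : ℕ) : qPoch n ≠ 0 :=
  prod_ne_zero_iff.mpr fun t _ => one_sub_X_pow_succ_ne_zero t

lemma qbin_eq_div {m r : ℤ} {n a b : ℕ} (hm : m = n) (hr : r = a) (hn : n = a + b) :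
    qbin m r = qPoch n / (qPoch a * qPoch b) := by
  rw [qbin, if_pos ⟨by omega, by omega⟩, show m.toNat = n by omega, show r.toNat = a by omega,
    show (m - r).toNat = b by omega]

lemma qbin_of_neg {m r : ℤ} (h : r < 0) : qbin m r = 0 := if_neg (by omega)

lemma qbin_of_lt {m r : ℤ} (h : m < r) : qbin m r = 0 := if_neg (by omega)

lemma qbin_zero_right {m : ℤ} (hm : 0 ≤ m) : qbin m 0 = 1 := by
  lift m to ℕ using hm
  rw [qbin_eq_div rfl Nat.cast_zero.symm (zero_add m).symm, qPoch_zero, one_mul,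
    div_self (qPoch_ne_zero m)]

lemma qbin_sub_right (m r : ℤ) : qbin m (m - r) = qbin m r := by
  simp only [qbin, sub_nonneg, sub_le_self_iff, sub_sub_cancel, and_comm, mul_comm]

lemma qbin_self {m : ℤ} (hm : 0 ≤ m) : qbin m m = 1 := by
  rw [← qbin_sub_right, sub_self, qbin_zero_right hm]

lemma qbin_mul_qbin (n k r : ℤ) :
    qbin n k * qbin k r = qbin n r * qbin (n - r) (k - r) := by
  rcases lt_or_ge r 0 with hr | hr
  · simp only [qbin_of_neg hr, mul_zero, zero_mul]
  rcases lt_or_ge k r with hrk | hrk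
  · simp only [qbin_of_lt hrk, qbin_of_neg (sub_neg.mpr hrk), mul_zero]
  rcases lt_or_ge n k with hkn | hkn
  · simp only [qbin_of_lt hkn, qbin_of_lt (sub_lt_sub_right hkn r), mul_zero, zero_mul]
  lift r to ℕ using hr
  obtain ⟨s, rfl⟩ := Int.le.dest hrk
  obtain ⟨t, rfl⟩ := Int.le.dest hkn
  rw [qbin_eq_div (n := r + s + t) (a := r + s) (b := t) (by omega) (by omega) rfl,
    qbin_eq_div (n := r + s) (a := r) (b := s) (by omega) rfl rfl,
    qbin_eq_div (n := r + s + t) (a := r) (b := s + t) (by omega) rfl (by omega),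
    qbin_eq_div (n := s + t) (a := s) (b := t) (by omega) (by omega) rfl]
  field_simp [qPoch_ne_zero]

lemma qPoch_div_succ_succ (r s : ℕ) :
    qPoch (r + s + 2) / (qPoch (r + 1) * qPoch (s + 1)) =
      qPoch (r + s + 1) / (qPoch (r + 1) * qPoch s) +
        q ^ (s + 1) * (qPoch (r + s + 1) / (qPoch r * qPoch (s + 1))) := by
  have hr := one_sub_X_pow_succ_ne_zero r
  have hs := one_sub_X_pow_succ_ne_zero s
  have hpow : q ^ (r + s + 1 + 1) = q ^ (r + 1) * q ^ (s + 1) := by ring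
  rw [qPoch_succ (r + s + 1), hpow, qPoch_succ r, qPoch_succ s]
  generalize q ^ (r + 1) = x at *
  generalize q ^ (s + 1) = y at *
  field_simp [qPoch_ne_zero]
  ring

lemma qbin_add_one {n : ℤ} (hn : 0 ≤ n) (k : ℤ) :
    qbin (n + 1) k = qbin n k + q ^ (n + 1 - k) * qbin n (k - 1) := by
  rcases lt_trichotomy k 0 with hk | rfl | hk
  · simp only [qbin_of_neg hk, qbin_of_neg (show k - 1 < 0 by omega), mul_zero, add_zero]
  · rw [qbin_zero_right hn, qbin_zero_right (by omega), qbin_of_neg (by omega), mul_zero, add_zero]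
  rcases lt_trichotomy k (n + 1) with hkn | rfl | hkn
  · obtain ⟨r, rfl⟩ : ∃ r : ℕ, k = r + 1 := ⟨(k - 1).toNat, by omega⟩
    obtain ⟨s, rfl⟩ : ∃ s : ℕ, n = r + s + 1 := ⟨(n - r - 1).toNat, by omega⟩
    have hexp : (r + s + 1 + 1 - (r + 1) : ℤ) = (s + 1 : ℕ) := by omega
    rw [qbin_eq_div (n := r + s + 2) (a := r + 1) (b := s + 1) (by omega) (by omega) (by omega),
      qbin_eq_div (n := r + s + 1) (a := r + 1) (b := s) (by omega) (by omega) (by omega),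
      qbin_eq_div (n := r + s + 1) (a := r) (b := s + 1) (by omega) (by omega) (by omega),
      hexp, zpow_natCast, qPoch_div_succ_succ]
  · rw [qbin_self (by omega), qbin_of_lt (by omega), sub_self, zpow_zero, add_sub_cancel_right,
      qbin_self hn, zero_add, one_mul]
  · simp only [qbin_of_lt hkn, qbin_of_lt (show n < k by omega),
      qbin_of_lt (show n < k - 1 by omega), mul_zero, add_zero]

lemma qbin_vandermonde {a b : ℤ} (ha : 0 ≤ a) (hb : 0 ≤ b) (j : ℤ) :
    ∑ k ∈ Icc 0 a, q ^ ((a - k) * (j - k)) * qbin a k * qbin b (j - k) = qbin (a + b) j := by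
  induction b, hb using Int.leInduction generalizing j with
  | base =>
    rw [add_zero, sum_eq_single j]
    · simp only [sub_self, mul_zero, zpow_zero, one_mul, qbin_zero_right le_rfl, mul_one]
    · intro k _ hkj
      rcases lt_or_gt_of_ne hkj with hk | hk
      · rw [qbin_of_lt (sub_pos.mpr hk), mul_zero]
      · rw [qbin_of_neg (sub_neg.mpr hk), mul_zero]
    · intro hj
      rw [qbin, if_neg (mt mem_Icc.mpr hj), mul_zero, zero_mul]
  | succ b hb ih =>
    have hterm (k : ℤ) :
        q ^ ((a - k) * (j - k)) * qbin a k * qbin (b + 1) (j - k) =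
          q ^ ((a - k) * (j - k)) * qbin a k * qbin b (j - k) +
          q ^ (a + b + 1 - j) *
            (q ^ ((a - k) * (j - 1 - k)) * qbin a k * qbin b (j - 1 - k)) := by
      have hexp : q ^ ((a - k) * (j - k)) * q ^ (b + 1 - (j - k)) =
          q ^ (a + b + 1 - j) * q ^ ((a - k) * (j - 1 - k)) := by
        rw [← zpow_add₀ RatFunc.X_ne_zero, ← zpow_add₀ RatFunc.X_ne_zero]
        ring_nf
      rw [qbin_add_one hb, sub_right_comm j k 1]
      linear_combination qbin a k * qbin b (j - 1 - k) * hexp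
    simp only [hterm, sum_add_distrib, ← mul_sum, ih]
    rw [← add_assoc, qbin_add_one (add_nonneg ha hb)]

lemma two_mul_triZ (n : ℤ) : 2 * triZ n = n * (n + 1) :=
  Int.mul_ediv_cancel' (Int.even_mul_succ_self n).two_dvd

lemma triZ_add_sub_add_triZ (i j k : ℤ) :
    triZ (i + j - k) + triZ k = triZ i + triZ j + (i - k) * (j - k) := by
  linarith [two_mul_triZ (i + j - k), two_mul_triZ k, two_mul_triZ i, two_mul_triZ j]

theorem double_bounded_key_identity_triangular_general (L M i j : ℤ) (hi : 0 ≤ i) (hL : i ≤ L) :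
    ∑ k ∈ Finset.Icc (0 : ℤ) (min i j),
      q ^ (triZ (i + j - k) + triZ k) *
        qbin (M - i - j + k) k * qbin (M - j) (i - k) * qbin (L - i) (j - k) =
    q ^ (triZ i + triZ j) * (qbin L j * qbin (M - j) i) := by
  have hrevision (k : ℤ) :
      qbin (M - i - j + k) k * qbin (M - j) (i - k) = qbin (M - j) i * qbin i k := by
    rw [← qbin_sub_right i k, qbin_mul_qbin, sub_sub_cancel, mul_comm]
    ring_nf
  have hvandermonde : ∑ k ∈ Icc 0 (min i j),
      q ^ ((i - k) * (j - k)) * qbin i k * qbin (L - i) (j - k) =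
        qbin L j := by
    rw [← add_sub_cancel i L, ← qbin_vandermonde hi (sub_nonneg.mpr hL), add_sub_cancel]
    refine sum_subset (Icc_subset_Icc_right (min_le_left i j)) fun k hk hkmin => ?_
    rw [mem_Icc] at hk hkmin
    rw [qbin_of_neg (show j - k < 0 by omega), mul_zero]
  rw [← hvandermonde, sum_mul, mul_sum]
  refine sum_congr rfl fun k _ => ?_
  rw [triZ_add_sub_add_triZ, zpow_add₀ RatFunc.X_ne_zero]
  linear_combination q ^ (triZ i + triZ j) *
    q ^ ((i - k) * (j - k)) * qbin (L - i) (j - k) * hrevision k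

end QBinomial

/-- Identity (4.4): for `i, j ≥ 0` and `L, M ≥ i + j`,
`∑_{k=0}^{min(i,j)} q^{T_{i+j-k}+T_k} [M-i-j+k; k] [M-j; i-k] [L-i; j-k]
  = q^{T_i+T_j} [L; j] [M-j; i]`. -/
theorem double_bounded_key_identity_triangular (L M i j : ℤ)
    (hi : 0 ≤ i) (hj : 0 ≤ j) (hL : i + j ≤ L) (hM : i + j ≤ M) :
    ∑ k ∈ Finset.Icc (0 : ℤ) (min i j),
      (RatFunc.X : RatFunc ℚ) ^ (triZ (i + j - k) + triZ k) *
        qbin (M - i - j + k) k * qbin (M - j) (i - k) * qbin (L - i) (j - k) =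
    (RatFunc.X : RatFunc ℚ) ^ (triZ i + triZ j) * (qbin L j * qbin (M - j) i) :=
  double_bounded_key_identity_triangular_general L M i j hi (by omega)
end
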